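/- Let N be a positive natural number and let λ₀, ξ, α_SI, p, p_k, σ² be positive reals, and d_k, d_t positive reals. Let a_t, a_k ∈ ℂᴺ have all entries of modulus 1, let H_r = √(λ₀ ξ)·d_t⁻²·(a_t a_tᴴ), let H_SI ∈ ℂᴺˣᴺ have all entries of modulus √(α_SI), and let x = √(p/N)·a_t. Then (λ₀ p_k N d_k⁻²)/(‖(H_r + H_SI)x‖² + N σ²) ≥ (λ₀ p_k d_k⁻²)/((√(λ₀ ξ N)·d_t⁻² + √(α_SI N))² p + σ²). -/

import Mathlib

open scoped BigOperators

/-- The Euclidean (ℓ²) norm of a complex vector indexed by `Fin N`. -/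
noncomputable def euclNorm {N : ℕ} (v : Fin N → ℂ) : ℝ :=
  Real.sqrt (∑ i, ‖v i‖ ^ 2)

/-!
The interference power `‖(H_r + H_SI) x‖²` is at most `‖H_r + H_SI‖_F² ‖x‖²` by Cauchy–Schwarz, and
the squared Frobenius norm is at most the number of entries times the square of a common bound on
their moduli. The factor by which the receive array multiplies this bound also multiplies the
signal power and the noise, so it cancels.
-/

section EuclNorm

variable {M N : ℕ}

theorem euclNorm_sq (v : Fin N → ℂ) : euclNorm v ^ 2 = ∑ i, ‖v i‖ ^ 2 :=
  Real.sq_sqrt (by positivity)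

theorem euclNorm_smul_sq (r : ℂ) (v : Fin N → ℂ) :
    euclNorm (r • v) ^ 2 = ‖r‖ ^ 2 * euclNorm v ^ 2 := by
  simp only [euclNorm_sq, Pi.smul_apply, norm_smul, mul_pow, Finset.mul_sum]

theorem euclNorm_sq_of_norm_eq_one {v : Fin N → ℂ} (hv : ∀ i, ‖v i‖ = 1) :
    euclNorm v ^ 2 = N := by
  simp [euclNorm_sq, hv]

theorem norm_dotProduct_sq_le (u v : Fin N → ℂ) :
    ‖u ⬝ᵥ v‖ ^ 2 ≤ euclNorm u ^ 2 * euclNorm v ^ 2 := by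
  calc ‖u ⬝ᵥ v‖ ^ 2 ≤ (∑ j, ‖u j‖ * ‖v j‖) ^ 2 := by
        gcongr
        exact norm_sum_le_of_le _ fun j _ => (norm_mul (u j) (v j)).le
    _ ≤ euclNorm u ^ 2 * euclNorm v ^ 2 := by
        simpa only [euclNorm_sq] using Finset.sum_mul_sq_le_sq_mul_sq Finset.univ _ _

theorem euclNorm_mulVec_sq_le_frobenius (A : Matrix (Fin M) (Fin N) ℂ) (v : Fin N → ℂ) :
    euclNorm (A.mulVec v) ^ 2 ≤ (∑ i, ∑ j, ‖A i j‖ ^ 2) * euclNorm v ^ 2 := by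
  rw [euclNorm_sq (A.mulVec v), Finset.sum_mul]
  refine Finset.sum_le_sum fun i _ => ?_
  rw [← euclNorm_sq (A i)]
  exact norm_dotProduct_sq_le (A i) v

theorem euclNorm_mulVec_sq_le_of_norm_le {A : Matrix (Fin M) (Fin N) ℂ} {c : ℝ}
    (hA : ∀ i j, ‖A i j‖ ≤ c) (v : Fin N → ℂ) :
    euclNorm (A.mulVec v) ^ 2 ≤ M * N * c ^ 2 * euclNorm v ^ 2 := by
  have frobenius_le : ∑ i, ∑ j, ‖A i j‖ ^ 2 ≤ M * N * c ^ 2 :=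
    calc ∑ i, ∑ j, ‖A i j‖ ^ 2 ≤ ∑ _i : Fin M, ∑ _j : Fin N, c ^ 2 := by
          gcongr with i _ j _
          exact hA i j
      _ = M * N * c ^ 2 := by
          simp only [Finset.sum_const, Finset.card_univ, Fintype.card_fin, nsmul_eq_mul, mul_assoc]
  exact (euclNorm_mulVec_sq_le_frobenius A v).trans (by gcongr)

end EuclNorm

theorem norm_smul_vecMulVec_star_apply {m n : Type*} (r : ℂ) (a : m → ℂ) (b : n → ℂ)
    (i : m) (j : n) :
    ‖(r • Matrix.vecMulVec a (star b)) i j‖ = ‖r‖ * (‖a i‖ * ‖b j‖) := by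
  simp only [Matrix.smul_apply, Matrix.vecMulVec_apply, Pi.star_apply, norm_smul, norm_mul,
    norm_star]

theorem div_le_mul_div_add_of_le_mul {m s E I w : ℝ} (hm : 0 < m) (hs : 0 ≤ s) (hw : 0 < w)
    (hE : 0 ≤ E) (hEI : E ≤ m * I) : s / (I + w) ≤ s * m / (E + m * w) := by
  calc s / (I + w) = s * m / (m * I + m * w) := by
        rw [← mul_add, mul_comm m, mul_div_mul_right _ _ hm.ne']
    _ ≤ s * m / (E + m * w) := by gcongr

-- `s` is the received signal power per antenna; `c` and `b` stand for `√(λ₀ ξ) / d_t²` and `√α_SI`.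
theorem communication_sinr_lower_bound_general {M N : ℕ} (hM : 0 < M) {s p sigma2 c b : ℝ}
    (hs : 0 ≤ s) (hsigma2 : 0 < sigma2) {Hr HSI : Matrix (Fin M) (Fin N) ℂ}
    (hHr : ∀ i j, ‖Hr i j‖ ≤ c) (hHSI : ∀ i j, ‖HSI i j‖ ≤ b)
    {x : Fin N → ℂ} (hx : euclNorm x ^ 2 ≤ p) :
    s * M / (euclNorm ((Hr + HSI).mulVec x) ^ 2 + M * sigma2) ≥
      s / ((c * √N + b * √N) ^ 2 * p + sigma2) := by
  have entry_le : ∀ i j, ‖(Hr + HSI) i j‖ ≤ c + b := fun i j =>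
    norm_add_le_of_le (hHr i j) (hHSI i j)
  have interference_le : euclNorm ((Hr + HSI).mulVec x) ^ 2 ≤
      M * ((c * √N + b * √N) ^ 2 * p) :=
    calc euclNorm ((Hr + HSI).mulVec x) ^ 2 ≤ M * N * (c + b) ^ 2 * euclNorm x ^ 2 :=
          euclNorm_mulVec_sq_le_of_norm_le entry_le x
      _ ≤ M * N * (c + b) ^ 2 * p := by gcongr
      _ = M * ((c * √N + b * √N) ^ 2 * p) := by
          rw [← add_mul, mul_pow, Real.sq_sqrt N.cast_nonneg]
          ring
  exact div_le_mul_div_add_of_le_mul (by exact_mod_cast hM) hs hsigma2 (sq_nonneg _) interference_le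

/-- Lower bound `γ̃_k ≥ γ_k` on the uplink communication SINR. -/
theorem communication_sinr_lower_bound (N : ℕ) (hN : 0 < N)
    (lam0 xi alphaSI p pk sigma2 dk dt : ℝ)
    (hlam0 : 0 < lam0) (hxi : 0 < xi) (halphaSI : 0 < alphaSI) (hp : 0 < p)
    (hpk : 0 < pk) (hsigma2 : 0 < sigma2) (hdk : 0 < dk) (hdt : 0 < dt)
    (a_t a_k : Fin N → ℂ) (hat : ∀ i, ‖a_t i‖ = 1) (hak : ∀ i, ‖a_k i‖ = 1)
    (Hr HSI : Matrix (Fin N) (Fin N) ℂ)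
    (hHr : Hr = ((Real.sqrt (lam0 * xi) / dt ^ 2 : ℝ) : ℂ) •
      Matrix.vecMulVec a_t (star a_t))
    (hHSI : ∀ i j, ‖HSI i j‖ = Real.sqrt alphaSI)
    (x : Fin N → ℂ) (hx : x = (Real.sqrt (p / N) : ℂ) • a_t) :
    (lam0 * pk * N / dk ^ 2) / (euclNorm ((Hr + HSI).mulVec x) ^ 2 + N * sigma2) ≥
      (lam0 * pk / dk ^ 2) /
        ((Real.sqrt (lam0 * xi * N) / dt ^ 2 + Real.sqrt (alphaSI * N)) ^ 2 * p +
          sigma2) := by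
  have echo_entry : ∀ i j, ‖Hr i j‖ = √(lam0 * xi) / dt ^ 2 := fun i j => by
    rw [hHr, norm_smul_vecMulVec_star_apply, hat, hat, mul_one, mul_one,
      Complex.norm_of_nonneg (by positivity)]
  have transmit_power : euclNorm x ^ 2 = p := by
    rw [hx, euclNorm_smul_sq, euclNorm_sq_of_norm_eq_one hat,
      Complex.norm_of_nonneg (Real.sqrt_nonneg _), Real.sq_sqrt (by positivity),
      div_mul_cancel₀ _ (by positivity)]
  rw [Real.sqrt_mul (by positivity), Real.sqrt_mul halphaSI.le, mul_div_right_comm (lam0 * pk),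
    mul_div_right_comm √(lam0 * xi)]
  exact communication_sinr_lower_bound_general hN (by positivity) hsigma2
    (fun i j => (echo_entry i j).le) (fun i j => (hHSI i j).le) transmit_power.le
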